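/- Let d ∈ ℕ and let S_d be an order 2 digital (t,d)-sequence over 𝔽_2 whose generating matrices E_i = (e_{i,k,ℓ})_{k,ℓ≥1} satisfy e_{i,k,ℓ} = 0 for all k > 2ℓ and all i ∈ {1,…,d}. Let N ≥ 2 have binary expansion N = 2^{n_r} + ⋯ + 2^{n_1} with n_r > … > n_1 ≥ 0, and set n_0 = 0 and n_{r+1} = log₂ N. There is a constant C depending only on d such that for every j ∈ ℕ_{−1}^d with n_μ ≤ |j| + t/2 < n_{μ+1} for some μ ∈ {0,1,…,r}, and every m ∈ 𝔻_j: |⟨D_{S_d}^N, h_{j,m}⟩| ≤ C · 2^t · N^{−1} · (2^{−|j|} + (2 n_{μ+1} − t − 2|j|)^{d−1} · 2^{−n_{μ+1}}). -/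

import Mathlib

open MeasureTheory
open scoped ENNReal

noncomputable section

/-- The closed unit cube `[0,1]^d`. -/
def unitCube (d : ℕ) : Set (Fin d → ℝ) := Set.univ.pi fun _ => Set.Icc (0:ℝ) 1

/-- The half-open unit cube `[0,1)^d`. -/
def unitCubeIco (d : ℕ) : Set (Fin d → ℝ) := Set.univ.pi fun _ => Set.Ico (0:ℝ) 1

/-- Discrepancy function of the first `N` points of the sequence `S` in `[0,1)^d`. -/
def discSeq (d : ℕ) (S : ℕ → Fin d → ℝ) (N : ℕ) (x : Fin d → ℝ) : ℝ :=
  (Nat.card {k : Fin N // ∀ i, S k i < x i} : ℝ) / N - ∏ i, x i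

/-- One-dimensional Haar function `h_{j,m}`, with `h_{-1,0} = 1_{[0,1)}`. -/
def haar1 (j : ℤ) (m : ℕ) (x : ℝ) : ℝ :=
  if j = -1 then (if 0 ≤ x ∧ x < 1 then 1 else 0)
  else if (m:ℝ)/2^j.toNat ≤ x ∧ x < ((m:ℝ) + 1/2)/2^j.toNat then 1
  else if ((m:ℝ) + 1/2)/2^j.toNat ≤ x ∧ x < ((m:ℝ)+1)/2^j.toNat then -1
  else 0

/-- `d`-dimensional (tensor product) Haar function. -/
def haarFn (d : ℕ) (j : Fin d → ℤ) (m : Fin d → ℕ) (x : Fin d → ℝ) : ℝ :=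
  ∏ i, haar1 (j i) (m i) (x i)

/-- Haar coefficient `⟨f, h_{j,m}⟩`. -/
def haarCoeff (d : ℕ) (f : (Fin d → ℝ) → ℝ) (j : Fin d → ℤ) (m : Fin d → ℕ) : ℝ :=
  ∫ x in unitCube d, f x * haarFn d j m x

/-- `|j| = max(j₁,0) + ⋯ + max(j_d,0)`. -/
def jnorm (d : ℕ) (j : Fin d → ℤ) : ℕ := ∑ i, (j i).toNat

/-- One-dimensional dyadic interval `I_{j,m}`. -/
def dyadicI (j : ℤ) (m : ℕ) : Set ℝ :=
  Set.Ico ((m:ℝ)/2^j.toNat) (((m:ℝ)+1)/2^j.toNat)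

/-- `d`-dimensional dyadic box `I_{j,m}`. -/
def dyadicBox (d : ℕ) (j : Fin d → ℤ) (m : Fin d → ℕ) : Set (Fin d → ℝ) :=
  Set.univ.pi fun i => dyadicI (j i) (m i)

/-- The index set `𝔻_j` as a finset. -/
def Dfin (d : ℕ) (j : Fin d → ℤ) : Finset (Fin d → ℕ) :=
  Fintype.piFinset fun i => Finset.range (2 ^ (j i).toNat)

/-- The index set `𝔻_j` for `j ∈ ℕ₀^d`. -/
def Dfin0 (d : ℕ) (j : Fin d → ℕ) : Finset (Fin d → ℕ) :=
  Fintype.piFinset fun i => Finset.range (2 ^ (j i))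

/-- Coordinate of the `k`-th point of a digital sequence over `𝔽₂` with generating
matrix `C` (`0`-based rows and columns). -/
def digitalCoord (C : ℕ → ℕ → ZMod 2) (k : ℕ) : ℝ :=
  ∑' i : ℕ,
    (((∑ ℓ ∈ Finset.range (k+1), C i ℓ * (if k.testBit ℓ then 1 else 0)).val : ℕ) : ℝ) / 2 ^ (i + 1)

/-- The digital sequence over `𝔽₂` generated by matrices `C 0, …, C (d-1)`. -/
def digitalSeq (d : ℕ) (C : Fin d → ℕ → ℕ → ZMod 2) : ℕ → Fin d → ℝ :=
  fun k j => digitalCoord (C j) k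

/-- `C 0, …, C (d-1)` generate an order `α` digital `(t,n,d)`-net over `𝔽₂`,
where the relevant submatrices have `q` rows (`q ≥ αn`) and `n` columns.
Row indices are `0`-based; the `1`-based row value of row `r` is `r+1`. -/
def IsOrderNet (α n t q d : ℕ) (C : Fin d → ℕ → ℕ → ZMod 2) : Prop :=
  ∀ (ν : Fin d → ℕ) (r : ∀ j : Fin d, Fin (ν j) → ℕ),
    (∀ j, StrictAnti (r j)) →
    (∀ j l, r j l < q) →
    (∑ j, ∑ l ∈ Finset.univ.filter (fun l : Fin (ν j) => (l:ℕ) < α), (r j l + 1)) ≤ α * n - t →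
    LinearIndependent (ZMod 2)
      (fun p : Σ j : Fin d, Fin (ν j) => fun col : Fin n => C p.1 (r p.1 p.2) col)

/-- `C 0, …, C (d-1)` generate an order `α` digital `(t,d)`-sequence over `𝔽₂`. -/
def IsOrderSeq (α t d : ℕ) (C : Fin d → ℕ → ℕ → ZMod 2) : Prop :=
  ∀ n : ℕ, t < α * n → IsOrderNet α n t (α * n) d C

/-- The condition `e_{i,k,ℓ} = 0` for all `k > 2ℓ` (in `1`-based indexing). -/
def Triangular2 (d : ℕ) (E : Fin d → ℕ → ℕ → ZMod 2) : Prop :=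
  ∀ i k ℓ, 2 * (ℓ + 1) < k + 1 → E i k ℓ = 0

open scoped Classical in
/-- The quantity `λ(U)⁻¹ ∑_{j ∈ ℕ₀^d} 2^{|j|} ∑_{m : I_{j,m} ⊆ U} ⟨f,h_{j,m}⟩²`. -/
def bmoSq (d : ℕ) (f : (Fin d → ℝ) → ℝ) (U : Set (Fin d → ℝ)) : ℝ≥0∞ :=
  (volume U)⁻¹ * ∑' j : Fin d → ℕ, ∑ m ∈ Dfin0 d j,
    if dyadicBox d (fun i => (j i : ℤ)) m ⊆ U then
      (2:ℝ≥0∞) ^ (∑ i, j i) * ENNReal.ofReal ((haarCoeff d f (fun i => (j i : ℤ)) m)^2)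
    else 0

/-- The BMO (semi-)norm `‖f | bmo^d‖`. -/
def bmoNorm (d : ℕ) (f : (Fin d → ℝ) → ℝ) : ℝ≥0∞ :=
  (⨆ U : {U : Set (Fin d → ℝ) // MeasurableSet U ∧ U ⊆ unitCubeIco d ∧ 0 < volume U},
    bmoSq d f U.1) ^ (1/2 : ℝ)

/-- The Orlicz norm of `f` on `[0,1)^d` with respect to the Young function `ψ`,
with the convention `inf ∅ = ∞`. -/
def orliczNorm (d : ℕ) (ψ : ℝ → ℝ) (f : (Fin d → ℝ) → ℝ) : ℝ≥0∞ :=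
  ⨅ K : {K : ℝ // 0 < K ∧ ∫ x in unitCubeIco d, ψ (|f x| / K) ≤ 1}, ENNReal.ofReal K.1

/-- `ψ` is a Young function which coincides with `exp(x^β) - 1` for all large `x`. -/
def IsYoungExp (β : ℝ) (ψ : ℝ → ℝ) : Prop :=
  ConvexOn ℝ (Set.Ici 0) ψ ∧ ψ 0 = 0 ∧ (∀ x : ℝ, 0 < x → 0 < ψ x) ∧
    ∃ x₀ : ℝ, ∀ x ≥ x₀, ψ x = Real.exp (x ^ β) - 1

/-- The set of valid Haar indices `j ∈ ℕ_{-1}^d`. -/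
def validJ (d : ℕ) : Set (Fin d → ℤ) := {j | ∀ i, -1 ≤ j i}

/-- The `q`-th power of the Haar-characterization of the `S^s_{p,q}B` norm:
`∑_{j ∈ ℕ_{-1}^d} 2^{|j|(s-1/p+1)q} (∑_{m ∈ 𝔻_j} |⟨f,h_{j,m}⟩|^p)^{q/p}`. -/
def besovSum (d : ℕ) (p q s : ℝ) (f : (Fin d → ℝ) → ℝ) : ℝ≥0∞ :=
  ∑' j : validJ d,
    ENNReal.ofReal ((2:ℝ) ^ ((jnorm d j.1 : ℝ) * (s - 1/p + 1) * q) *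
      (∑ m ∈ Dfin d j.1, |haarCoeff d f j.1 m| ^ p) ^ (q / p))

/-- Coordinate of the `k`-th point of a digital net with `q × n` generating matrix `C`. -/
def netCoord (q n : ℕ) (C : ℕ → ℕ → ZMod 2) (k : ℕ) : ℝ :=
  ∑ i ∈ Finset.range q,
    ((∑ ℓ ∈ Finset.range n, C i ℓ * (if k.testBit ℓ then 1 else 0)).val : ℝ) / 2 ^ (i + 1)

/-- `n_{μ+1}`, with the convention `n_{r+1} = log₂ N` (indices `1`-based, `n` stored `0`-based). -/
def nExt (r : ℕ) (n : Fin r → ℕ) (N : ℕ) (μ : ℕ) : ℝ :=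
  if h : μ < r then (n ⟨μ, h⟩ : ℝ) else Real.logb 2 N

/-- `n_μ`, with the convention `n_0 = 0` (indices `1`-based, `n` stored `0`-based). -/
def nPrev (r : ℕ) (n : Fin r → ℕ) (μ : ℕ) : ℝ :=
  if h : 1 ≤ μ ∧ μ ≤ r then (n ⟨μ - 1, by omega⟩ : ℝ) else 0

/-- The dyadic square function `Sf`, valued in `ℝ≥0∞`. -/
def sqFnE (d : ℕ) (f : (Fin d → ℝ) → ℝ) (x : Fin d → ℝ) : ℝ≥0∞ :=
  (∑' j : validJ d, ∑ m ∈ Dfin d j.1,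
    ENNReal.ofReal ((2:ℝ) ^ (2 * jnorm d j.1) * (haarCoeff d f j.1 m)^2 *
      (dyadicBox d j.1 m).indicator (fun _ => (1:ℝ)) x)) ^ (1/2 : ℝ)

/-- `sup_{p > 1} p^{-1/β} ‖f‖_{L_p([0,1]^d)}`. -/
def supLp (d : ℕ) (β : ℝ) (f : (Fin d → ℝ) → ℝ) : ℝ≥0∞ :=
  ⨆ p : {p : ℝ // 1 < p},
    ENNReal.ofReal ((p:ℝ) ^ (-(1/β))) * eLpNorm f (ENNReal.ofReal (p:ℝ)) (volume.restrict (unitCube d))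

/-- `‖f | 𝒟₀^d‖² = ∑_{j ∈ ℕ₀^d} 2^{|j|} ∑_{m ∈ 𝔻_j} ⟨f,h_{j,m}⟩²`. -/
def dNormSq (d : ℕ) (f : (Fin d → ℝ) → ℝ) : ℝ≥0∞ :=
  ∑' j : Fin d → ℕ, ∑ m ∈ Dfin0 d j,
    ENNReal.ofReal ((2:ℝ) ^ (∑ i, j i) * (haarCoeff d f (fun i => (j i : ℤ)) m)^2)

/-- `‖f | 𝒟₀^d‖`. -/
def dNorm (d : ℕ) (f : (Fin d → ℝ) → ℝ) : ℝ≥0∞ := (dNormSq d f) ^ (1/2 : ℝ)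

/-!
The Haar coefficient of `x ↦ 1_{z < x}` at `(j, m)` vanishes unless `z` lies in the dyadic interval
`I_{j,m}`, and there it is a Walsh series in the binary digits of `z` with geometrically decreasing
coefficients. Over a block of `2 ^ p` consecutive points, which is an order `2` digital net, a
product of Walsh functions sums to zero unless its index lies in the dual net; order `2` forces the
surviving indices to be so large that a block with `2p > 2|j| + t` contributes at most
`2^t (2p - t - 2|j|)^{d-1} 2^{-p}`, up to a constant. The binary digits of `N` cut the first `N`
points into such blocks: those of the digits `n_{μ+1}, …, n_r` add up, geometrically, to the order
of the first of them, and the remaining points lie in one block of about `2^{|j| + t/2}` points,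
where counting the points in the dyadic box yields `2^t 2^{-|j|}`.
-/

/-! ### Binary expansions and Walsh functions -/

/-- The nontrivial additive character `a ↦ (-1)^a` of `𝔽₂`. -/
def signChar : AddChar (ZMod 2) ℝ := AddChar.zmodChar 2 neg_one_sq

theorem signChar_apply (a : ZMod 2) : signChar a = (-1) ^ a.val := AddChar.zmodChar_apply _ _

theorem signChar_eq_one_sub_two_mul_val (a : ZMod 2) : signChar a = 1 - 2 * (a.val : ℝ) := by
  obtain rfl | rfl : a = 0 ∨ a = 1 := by decide +revert
  · simp
  · norm_num [signChar_apply, ZMod.val_one]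

theorem signChar_one : signChar 1 = -1 := by simp [signChar_apply, ZMod.val_one]

theorem abs_signChar (a : ZMod 2) : |signChar a| = 1 := by rw [signChar_apply, abs_neg_one_pow]

theorem signChar_sum {ι : Type*} (s : Finset ι) (f : ι → ZMod 2) :
    signChar (∑ a ∈ s, f a) = ∏ a ∈ s, signChar (f a) :=
  map_prod signChar.toMonoidHom (fun a ↦ Multiplicative.ofAdd (f a)) s

theorem one_add_signChar_mul_signChar (a b : ZMod 2) :
    1 + signChar a * signChar b = if a = b then 2 else 0 := by
  obtain rfl | rfl : a = b ∨ a = b + 1 := by decide +revert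
  · norm_num [← sq, ← sq_abs, abs_signChar]
  · rw [← AddChar.map_add_eq_mul, add_right_comm, CharTwo.add_self_eq_zero]
    simp [signChar_one]

/-- The real number with binary expansion `0.y₀y₁y₂…`. -/
def binaryVal (y : ℕ → ZMod 2) : ℝ := Real.ofDigits (b := 2) y

theorem binaryVal_eq_tsum (y : ℕ → ZMod 2) :
    binaryVal y = ∑' i, ((y i).val : ℝ) / 2 ^ (i + 1) := by
  simp only [binaryVal, Real.ofDigits, Real.ofDigitsTerm, div_eq_mul_inv]
  rfl

theorem binaryVal_nonneg (y : ℕ → ZMod 2) : 0 ≤ binaryVal y := Real.ofDigits_nonneg _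

theorem binaryVal_le_one (y : ℕ → ZMod 2) : binaryVal y ≤ 1 := Real.ofDigits_le_one _

theorem hasSum_binaryVal (y : ℕ → ZMod 2) :
    HasSum (fun i ↦ ((y i).val : ℝ) / 2 ^ (i + 1)) (binaryVal y) := by
  refine (Real.summable_ofDigitsTerm (b := 2) (digits := y)).hasSum.congr_fun fun i ↦ ?_
  simp only [Real.ofDigitsTerm, div_eq_mul_inv]
  rfl

theorem hasSum_half_sub_binaryVal (y : ℕ → ZMod 2) :
    HasSum (fun i ↦ signChar (y i) / 2 ^ (i + 2)) (1 / 2 - binaryVal y) := by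
  have hconst : HasSum (fun i : ℕ ↦ (1 / 2 : ℝ) ^ i * (1 / 4)) (1 / 2) := by
    simpa [show (2 * 4⁻¹ : ℝ) = 2⁻¹ by norm_num] using hasSum_geometric_two.mul_right (1 / 4 : ℝ)
  refine (hconst.sub (hasSum_binaryVal y)).congr_fun fun i ↦ ?_
  rw [signChar_eq_one_sub_two_mul_val, one_div_pow]
  field_simp
  ring

theorem binaryVal_eq_head_add_tail (y : ℕ → ZMod 2) :
    binaryVal y = ((y 0).val + binaryVal fun i ↦ y (i + 1)) / 2 := by
  have hhead := (hasSum_binaryVal y).summable.tsum_eq_zero_add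
  rw [← binaryVal_eq_tsum] at hhead
  rw [hhead, binaryVal_eq_tsum, zero_add, pow_one, add_div, ← tsum_div_const]
  congr 2 with i
  rw [pow_succ _ (i + 1), div_div]

/-- The natural number with binary expansion `y₀y₁…y_{J-1}`, most significant digit first. -/
def prefixNat (y : ℕ → ZMod 2) : ℕ → ℕ
  | 0 => 0
  | J + 1 => 2 * prefixNat y J + (y J).val

theorem binaryVal_eq_prefixNat_add_tail (y : ℕ → ZMod 2) (J : ℕ) :
    binaryVal y = (prefixNat y J + binaryVal fun i ↦ y (i + J)) / 2 ^ J := by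
  induction J with
  | zero => simp [prefixNat]
  | succ J ih =>
    rw [ih, binaryVal_eq_head_add_tail fun i ↦ y (i + J), prefixNat]
    simp only [zero_add, add_assoc, add_comm 1 J]
    push_cast
    field_simp
    ring

theorem prefixNat_eq_prefixNat_iff {y η : ℕ → ZMod 2} {J : ℕ} :
    prefixNat y J = prefixNat η J ↔ ∀ a < J, y a = η a := by
  induction J with
  | zero => simp [prefixNat]
  | succ J ih =>
    have hy := (y J).val_lt
    have hη := (η J).val_lt
    rw [Nat.forall_lt_succ_right, ← ih, ← (ZMod.val_injective 2).eq_iff, prefixNat, prefixNat]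
    omega

theorem exists_prefixNat_eq {J m : ℕ} (hm : m < 2 ^ J) : ∃ η, prefixNat η J = m := by
  induction J generalizing m with
  | zero => exact ⟨0, by simp_all [prefixNat]⟩
  | succ J ih =>
    obtain ⟨η, hη⟩ := ih (m := m / 2) (by omega)
    refine ⟨Function.update η J (m : ZMod 2), ?_⟩
    have hcongr : prefixNat (Function.update η J (m : ZMod 2)) J = m / 2 := by
      rw [← hη, prefixNat_eq_prefixNat_iff]
      exact fun a ha ↦ Function.update_of_ne ha.ne _ _
    rw [prefixNat, hcongr, Function.update_self, ZMod.val_natCast]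
    omega

/-- The indicator of the dyadic interval of level `J` and position `m`, as a function of the digits
`y` rather than of `binaryVal y`, so that it is insensitive to ambiguous binary expansions. -/
def prefixInd (J m : ℕ) (y : ℕ → ZMod 2) : ℝ := if prefixNat y J = m then 1 else 0

theorem prefixInd_nonneg (J m : ℕ) (y : ℕ → ZMod 2) : 0 ≤ prefixInd J m y := by
  unfold prefixInd
  split_ifs <;> simp

theorem exists_prefixInd_eq_sum_signChar {J m : ℕ} (hm : m < 2 ^ J) :
    ∃ η : ℕ → ZMod 2, ∀ y, prefixInd J m y =
      (1 / 2) ^ J * ∑ S ∈ (Finset.range J).powerset,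
        signChar (∑ a ∈ S, η a) * signChar (∑ a ∈ S, y a) := by
  obtain ⟨η, rfl⟩ := exists_prefixNat_eq hm
  refine ⟨η, fun y ↦ ?_⟩
  simp only [signChar_sum, ← Finset.prod_mul_distrib]
  rw [← Finset.prod_one_add]
  simp only [one_add_signChar_mul_signChar]
  rw [Finset.prod_ite_zero, Finset.prod_const, Finset.card_range, prefixInd, mul_ite, ← mul_pow]
  simp only [prefixNat_eq_prefixNat_iff, Finset.mem_range, eq_comm]
  norm_num

/-! ### One-dimensional Haar coefficients -/

theorem haar1_neg_one (m : ℕ) : haar1 (-1) m = (Set.Ico (0 : ℝ) 1).indicator 1 := by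
  funext x
  simp [haar1, Set.indicator, Set.mem_Ico]

theorem haar1_of_ne_neg_one {j : ℤ} (hj : j ≠ -1) (m : ℕ) :
    haar1 j m = (Set.Ico ((m : ℝ) / 2 ^ j.toNat) ((m + 1 / 2) / 2 ^ j.toNat)).indicator 1 -
      (Set.Ico (((m : ℝ) + 1 / 2) / 2 ^ j.toNat) ((m + 1) / 2 ^ j.toNat)).indicator 1 := by
  funext x
  simp only [haar1, hj, if_false, Pi.sub_apply, Set.indicator, Set.mem_Ico, Pi.one_apply]
  split_ifs <;> grind

theorem measurable_haar1 (j : ℤ) (m : ℕ) : Measurable (haar1 j m) := by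
  by_cases hj : j = -1
  · rw [hj, haar1_neg_one]
    exact measurable_one.indicator measurableSet_Ico
  · rw [haar1_of_ne_neg_one hj]
    exact (measurable_one.indicator measurableSet_Ico).sub
      (measurable_one.indicator measurableSet_Ico)

theorem abs_haar1_le_one (j : ℤ) (m : ℕ) (x : ℝ) : |haar1 j m x| ≤ 1 := by
  unfold haar1
  split_ifs <;> simp

theorem integrableOn_mul_haar1 {f : ℝ → ℝ} (hf : MonotoneOn f (Set.Icc 0 1)) (j : ℤ)
    (m : ℕ) : IntegrableOn (fun x ↦ f x * haar1 j m x) (Set.Icc 0 1) :=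
  (hf.integrableOn_isCompact isCompact_Icc).mul_bdd (c := 1)
    (measurable_haar1 j m).aestronglyMeasurable (ae_of_all _ (abs_haar1_le_one j m))

theorem setIntegral_mul_indicator_Ico {f : ℝ → ℝ} {a b : ℝ} (ha : 0 ≤ a) (hab : a ≤ b)
    (hb : b ≤ 1) :
    ∫ x in Set.Icc 0 1, f x * (Set.Ico a b).indicator 1 x = ∫ x in a..b, f x := by
  have hind : (fun x ↦ f x * (Set.Ico a b).indicator 1 x) = (Set.Ico a b).indicator f := by
    funext x
    by_cases hx : x ∈ Set.Ico a b <;> simp [hx]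
  have hsub : Set.Ico a b ⊆ Set.Icc 0 1 :=
    Set.Ico_subset_Icc_self.trans (Set.Icc_subset_Icc ha hb)
  rw [hind, setIntegral_indicator measurableSet_Ico, Set.inter_eq_right.2 hsub,
    integral_Ico_eq_integral_Ioc, ← intervalIntegral.integral_of_le hab]

theorem setIntegral_mul_haar1_neg_one (f : ℝ → ℝ) (m : ℕ) :
    ∫ x in Set.Icc 0 1, f x * haar1 (-1) m x = ∫ x in (0 : ℝ)..1, f x := by
  rw [haar1_neg_one, setIntegral_mul_indicator_Ico le_rfl zero_le_one le_rfl]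

theorem setIntegral_mul_haar1_natCast {f : ℝ → ℝ} (hf : MonotoneOn f (Set.Icc 0 1)) {J m : ℕ}
    (hm : m < 2 ^ J) :
    ∫ x in Set.Icc 0 1, f x * haar1 (J : ℤ) m x =
      (∫ x in ((m : ℝ) / 2 ^ J)..((m + 1 / 2) / 2 ^ J), f x) -
        ∫ x in (((m : ℝ) + 1 / 2) / 2 ^ J)..((m + 1) / 2 ^ J), f x := by
  have hleft : (0 : ℝ) ≤ m / 2 ^ J := by positivity
  have hright : ((m : ℝ) + 1) / 2 ^ J ≤ 1 := by
    rw [div_le_one (by positivity)]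
    exact_mod_cast hm
  have hmid₁ : (m : ℝ) / 2 ^ J ≤ (m + 1 / 2) / 2 ^ J := by gcongr; linarith
  have hmid₂ : ((m : ℝ) + 1 / 2) / 2 ^ J ≤ (m + 1) / 2 ^ J := by gcongr; linarith
  have hint (a b : ℝ) :
      IntegrableOn (fun x ↦ f x * (Set.Ico a b).indicator 1 x) (Set.Icc 0 1) := by
    refine (hf.integrableOn_isCompact isCompact_Icc).mul_bdd (c := 1)
      (measurable_one.indicator measurableSet_Ico).aestronglyMeasurable (ae_of_all _ fun x ↦ ?_)
    by_cases hx : x ∈ Set.Ico a b <;> simp [hx]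
  simp only [haar1_of_ne_neg_one (show (J : ℤ) ≠ -1 by omega), Pi.sub_apply, mul_sub,
    Int.toNat_natCast]
  rw [integral_sub (hint _ _) (hint _ _),
    setIntegral_mul_indicator_Ico hleft hmid₁ (hmid₂.trans hright),
    setIntegral_mul_indicator_Ico (hleft.trans hmid₁) hmid₂ hright]

theorem intervalIntegral_ite_lt {a b : ℝ} (hab : a ≤ b) (z : ℝ) :
    ∫ x in a..b, (if z < x then (1 : ℝ) else 0) = max b z - max a z := by
  have hind : (fun x ↦ if z < x then (1 : ℝ) else 0) = (Set.Ioi z).indicator 1 := by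
    funext x
    simp [Set.indicator]
  rw [intervalIntegral.integral_of_le hab, hind, setIntegral_indicator measurableSet_Ioi,
    Set.Ioc_inter_Ioi]
  simp only [Pi.one_apply, setIntegral_const, smul_eq_mul, mul_one, Real.volume_real_Ioc]
  rcases le_total b z with h | h
  · simp [h, hab.trans h]
  · simp [h, hab]

/-- The one-dimensional Haar coefficient `⟨1_{z < x}, h_{j,m}(x)⟩`. -/
def haarTailIntegral (j : ℤ) (m : ℕ) (z : ℝ) : ℝ :=
  ∫ x in Set.Icc (0 : ℝ) 1, (if z < x then 1 else 0) * haar1 j m x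

/-- The one-dimensional Haar coefficient `⟨x, h_{j,m}(x)⟩`. -/
def haarFirstMoment (j : ℤ) (m : ℕ) : ℝ := ∫ x in Set.Icc (0 : ℝ) 1, x * haar1 j m x

theorem monotone_ite_lt (z : ℝ) : Monotone fun x ↦ if z < x then (1 : ℝ) else 0 := by
  intro x y hxy
  dsimp only
  split_ifs <;> linarith

theorem haarTailIntegral_neg_one (m : ℕ) {z : ℝ} (hz₀ : 0 ≤ z) (hz₁ : z ≤ 1) :
    haarTailIntegral (-1) m z = 1 - z := by
  rw [haarTailIntegral, setIntegral_mul_haar1_neg_one, intervalIntegral_ite_lt zero_le_one,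
    max_eq_left hz₁, max_eq_right hz₀]

theorem haarTailIntegral_natCast {J m : ℕ} (hm : m < 2 ^ J) (w : ℝ) :
    haarTailIntegral J m (w / 2 ^ J) =
      (2 * max ((m : ℝ) + 1 / 2) w - max (m : ℝ) w - max ((m : ℝ) + 1) w) / 2 ^ J := by
  have hmax (a : ℝ) : max (a / 2 ^ J) (w / 2 ^ J) = max a w / 2 ^ J :=
    max_div_div_right (by positivity) a w
  rw [haarTailIntegral, setIntegral_mul_haar1_natCast ((monotone_ite_lt _).monotoneOn _) hm,
    intervalIntegral_ite_lt (by gcongr; linarith), intervalIntegral_ite_lt (by gcongr; linarith)]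
  simp only [hmax]
  ring

theorem haarFirstMoment_neg_one (m : ℕ) : haarFirstMoment (-1) m = 1 / 2 := by
  rw [haarFirstMoment, setIntegral_mul_haar1_neg_one, integral_id]
  norm_num

theorem haarFirstMoment_natCast {J m : ℕ} (hm : m < 2 ^ J) :
    haarFirstMoment J m = -(1 / 2) ^ (J + 2) * (1 / 2) ^ J := by
  rw [haarFirstMoment, setIntegral_mul_haar1_natCast (f := fun x ↦ x) (monotone_id.monotoneOn _) hm,
    integral_id, integral_id, pow_add, one_div_pow]
  field_simp
  ring

theorem haarTailIntegral_natCast_binaryVal {J m : ℕ} (hm : m < 2 ^ J) (y : ℕ → ZMod 2) :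
    haarTailIntegral J m (binaryVal y) = prefixInd J m y *
      (-(1 / 2) ^ (J + 2) +
        (1 / 2) ^ (J + 1) * signChar (y J) * (1 / 2 - binaryVal fun i ↦ y (i + (J + 1)))) := by
  set u := binaryVal fun i ↦ y (i + J) with hu
  have hu₀ : 0 ≤ u := binaryVal_nonneg _
  have hu₁ : u ≤ 1 := binaryVal_le_one _
  rw [binaryVal_eq_prefixNat_add_tail y J, haarTailIntegral_natCast hm, prefixInd, ← hu]
  rcases lt_trichotomy (prefixNat y J) m with hlt | rfl | hgt
  · have hle : (prefixNat y J : ℝ) + 1 ≤ m := by exact_mod_cast hlt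
    rw [if_neg hlt.ne, max_eq_left (by linarith), max_eq_left (by linarith),
      max_eq_left (by linarith)]
    ring
  · have hhead := binaryVal_eq_head_add_tail fun i ↦ y (i + J)
    simp only [zero_add, ← hu, add_assoc, add_comm 1 J] at hhead
    set v := binaryVal fun i ↦ y (i + (J + 1))
    have hv₀ : 0 ≤ v := binaryVal_nonneg _
    have hv₁ : v ≤ 1 := binaryVal_le_one _
    rw [if_pos rfl, max_eq_right (by linarith : (prefixNat y J : ℝ) ≤ prefixNat y J + u),
      max_eq_left (by linarith : (prefixNat y J : ℝ) + u ≤ prefixNat y J + 1), pow_add, pow_add,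
      one_div_pow]
    obtain hy | hy : y J = 0 ∨ y J = 1 := by generalize y J = a; decide +revert
    · rw [hy, ZMod.val_zero, Nat.cast_zero] at hhead
      rw [max_eq_left (by linarith), hy, AddChar.map_zero_eq_one, hhead]
      field_simp
      ring
    · rw [hy, ZMod.val_one, Nat.cast_one] at hhead
      rw [max_eq_right (by linarith), hy, signChar_one, hhead]
      field_simp
      ring
  · have hle : (m : ℝ) + 1 ≤ prefixNat y J := by exact_mod_cast hgt
    rw [if_neg hgt.ne', max_eq_right (by linarith), max_eq_right (by linarith),
      max_eq_right (by linarith)]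
    ring

/-- Digit positions entering the `b`-th Walsh function in the expansion of
`haarTailIntegral j m` on its dyadic interval: none for `b = 0`; otherwise the position
`max j 0` (absent when `j = -1`), whose digit decides the half of the interval, and a later one. -/
def haarWalshSupport (j : ℤ) : ℕ → Finset ℕ
  | 0 => ∅
  | b + 1 => insert ((j + 1).toNat + b) (Finset.Ico j.toNat (j + 1).toNat)

/-- The coefficient of the Walsh function with digit positions `haarWalshSupport j b` in
`haarTailIntegral j m`, on the dyadic interval where it does not vanish. -/
def haarWalshCoeff (j : ℤ) : ℕ → ℝ
  | 0 => if j = -1 then 1 / 2 else -(1 / 2) ^ (j.toNat + 2)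
  | b + 1 => (1 / 2) ^ ((j + 1).toNat + b + 2)

theorem hasSum_haarTailIntegral {j : ℤ} (hj : -1 ≤ j) {m : ℕ} (hm : m < 2 ^ j.toNat)
    (y : ℕ → ZMod 2) :
    HasSum (fun b ↦ prefixInd j.toNat m y *
        (haarWalshCoeff j b * signChar (∑ x ∈ haarWalshSupport j b, y x)))
      (haarTailIntegral j m (binaryVal y)) := by
  rw [← hasSum_nat_add_iff' 1]
  simp only [Finset.sum_range_one, haarWalshSupport, haarWalshCoeff, Finset.sum_empty,
    AddChar.map_zero_eq_one, mul_one]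
  rcases hj.eq_or_lt' with rfl | hj
  · obtain rfl : m = 0 := by simpa using hm
    rw [haarTailIntegral_neg_one _ (binaryVal_nonneg y) (binaryVal_le_one y)]
    convert! hasSum_half_sub_binaryVal y using 1
    · funext b
      simp [prefixInd, prefixNat]
      ring
    · norm_num [prefixInd, prefixNat, show (-1 : ℤ).toNat = 0 from rfl]
      ring
  · obtain ⟨J, rfl⟩ := Int.eq_ofNat_of_zero_le (show 0 ≤ j by omega)
    simp only [Int.toNat_natCast, Int.toNat_natCast_add_one] at hm ⊢
    rw [haarTailIntegral_natCast_binaryVal hm, if_neg (by omega)]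
    convert! ((hasSum_half_sub_binaryVal fun i ↦ y (i + (J + 1))).mul_left
      (prefixInd J m y * ((1 / 2) ^ (J + 1) * signChar (y J)))) using 1
    · funext b
      rw [Nat.Ico_succ_singleton J, Finset.sum_insert (by simp; omega), Finset.sum_singleton,
        AddChar.map_add_eq_mul, add_comm b (J + 1)]
      simp only [one_div_pow, pow_add]
      field_simp
    · ring

theorem abs_haarWalshCoeff_le {j : ℤ} (hj : -1 ≤ j) (b : ℕ) :
    |haarWalshCoeff j b| ≤ (1 / 2) ^ j.toNat * (1 / 2) ^ (b + 1) := by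
  rw [← pow_add]
  rcases b with _ | b
  · unfold haarWalshCoeff
    split_ifs with h
    · norm_num [h, show (-1 : ℤ).toNat = 0 from rfl]
    · rw [abs_neg, abs_of_pos (by positivity)]
      exact pow_le_pow_of_le_one (by norm_num) (by norm_num) (by omega)
  · rw [haarWalshCoeff, abs_of_pos (by positivity)]
    exact pow_le_pow_of_le_one (by norm_num) (by norm_num) (by omega)

theorem haarFirstMoment_eq {j : ℤ} (hj : -1 ≤ j) {m : ℕ} (hm : m < 2 ^ j.toNat) :
    haarFirstMoment j m = haarWalshCoeff j 0 * (1 / 2) ^ j.toNat := by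
  rcases hj.eq_or_lt' with rfl | hj
  · norm_num [haarFirstMoment_neg_one, haarWalshCoeff, show (-1 : ℤ).toNat = 0 from rfl]
  · obtain ⟨J, rfl⟩ := Int.eq_ofNat_of_zero_le (show 0 ≤ j by omega)
    simp only [Int.toNat_natCast] at hm ⊢
    rw [haarFirstMoment_natCast hm, haarWalshCoeff, if_neg (by omega), Int.toNat_natCast]

theorem abs_haarFirstMoment_le {j : ℤ} (hj : -1 ≤ j) {m : ℕ} (hm : m < 2 ^ j.toNat) :
    |haarFirstMoment j m| ≤ (1 / 2) ^ j.toNat * (1 / 2) ^ j.toNat := by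
  rw [haarFirstMoment_eq hj hm, abs_mul, abs_of_pos (by positivity : (0 : ℝ) < (1 / 2) ^ j.toNat)]
  gcongr
  exact (abs_haarWalshCoeff_le hj 0).trans (mul_le_of_le_one_right (by positivity) (by norm_num))

theorem abs_haarTailIntegral_le {j : ℤ} (hj : -1 ≤ j) {m : ℕ} (hm : m < 2 ^ j.toNat)
    (y : ℕ → ZMod 2) :
    |haarTailIntegral j m (binaryVal y)| ≤ prefixInd j.toNat m y * (1 / 2) ^ j.toNat := by
  have hgeom : HasSum (fun b ↦ prefixInd j.toNat m y *
      ((1 / 2 : ℝ) ^ j.toNat * (1 / 2) ^ (b + 1))) (prefixInd j.toNat m y * (1 / 2) ^ j.toNat) := by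
    convert! (hasSum_geometric_two' (1 : ℝ)).mul_left
      (prefixInd j.toNat m y * (1 / 2) ^ j.toNat) using 1
    · funext b
      rw [pow_succ, one_div_pow 2 b]
      ring
    · ring
  refine (hasSum_haarTailIntegral hj hm y).norm_le_of_bounded hgeom fun b ↦ ?_
  rw [Real.norm_eq_abs, abs_mul, abs_mul, abs_signChar, mul_one,
    abs_of_nonneg (prefixInd_nonneg _ _ _)]
  exact mul_le_mul_of_nonneg_left (abs_haarWalshCoeff_le hj b) (prefixInd_nonneg _ _ _)

/-! ### Character sums over digital nets -/

/-- The `𝔽₂`-inner product of the vector `v` with the vector of binary digits of `k`. -/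
def bitDot (v : ℕ → ZMod 2) (k : ℕ) : ZMod 2 :=
  ∑ ℓ ∈ Finset.range (k + 1), v ℓ * (if k.testBit ℓ then 1 else 0)

theorem bitDot_eq_sum_range (v : ℕ → ZMod 2) {k K : ℕ} (hk : k < K) :
    bitDot v k = ∑ ℓ ∈ Finset.range K, v ℓ * (if k.testBit ℓ then 1 else 0) := by
  refine Finset.sum_subset (Finset.range_mono hk) fun ℓ _ hℓ ↦ ?_
  have hbit : k.testBit ℓ = false :=
    Nat.testBit_lt_two_pow (Nat.lt_two_pow_self.trans_le
      (Nat.pow_le_pow_right two_pos (by simp at hℓ; omega)))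
  simp [hbit]

theorem bitDot_sum {ι : Type*} (s : Finset ι) (v : ι → ℕ → ZMod 2) (k : ℕ) :
    bitDot (fun ℓ ↦ ∑ i ∈ s, v i ℓ) k = ∑ i ∈ s, bitDot (v i) k := by
  simp only [bitDot, Finset.sum_mul]
  exact Finset.sum_comm

theorem bitDot_xor_two_pow (v : ℕ → ZMod 2) (k ℓ₀ : ℕ) :
    bitDot v (k ^^^ 2 ^ ℓ₀) = bitDot v k + v ℓ₀ := by
  have hflip (ℓ : ℕ) : (if (k ^^^ 2 ^ ℓ₀).testBit ℓ then (1 : ZMod 2) else 0) =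
      (if k.testBit ℓ then 1 else 0) + if ℓ = ℓ₀ then 1 else 0 := by
    rw [Nat.testBit_xor, Nat.testBit_two_pow]
    by_cases hℓ : ℓ₀ = ℓ
    · cases k.testBit ℓ <;> simp [hℓ, CharTwo.add_self_eq_zero]
    · cases k.testBit ℓ <;> simp [hℓ, Ne.symm hℓ]
  rw [bitDot_eq_sum_range v (show k ^^^ 2 ^ ℓ₀ < (k ^^^ 2 ^ ℓ₀) + k + ℓ₀ + 1 by omega),
    bitDot_eq_sum_range v (show k < (k ^^^ 2 ^ ℓ₀) + k + ℓ₀ + 1 by omega)]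
  simp only [hflip, mul_add, Finset.sum_add_distrib, mul_ite, mul_one, mul_zero,
    Finset.sum_ite_eq', Finset.mem_range]
  rw [if_pos (by omega)]

/-- The `c`-th aligned block of `2 ^ n` consecutive indices. -/
def indexBlock (c n : ℕ) : Finset ℕ := Finset.Ico (c * 2 ^ n) ((c + 1) * 2 ^ n)

theorem mem_indexBlock {c n k : ℕ} : k ∈ indexBlock c n ↔ k / 2 ^ n = c := by
  rw [indexBlock, Finset.mem_Ico, Nat.div_eq_iff (by positivity), add_mul, one_mul]
  have : 0 < 2 ^ n := by positivity
  omega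

theorem card_indexBlock (c n : ℕ) : (indexBlock c n).card = 2 ^ n := by
  rw [indexBlock, Nat.card_Ico, add_mul, one_mul, Nat.add_sub_cancel_left]

theorem sum_indexBlock_signChar_bitDot_eq_zero {v : ℕ → ZMod 2} {n ℓ : ℕ} (hℓ : ℓ < n)
    (hv : v ℓ = 1) (c : ℕ) : ∑ k ∈ indexBlock c n, signChar (bitDot v k) = 0 := by
  refine Finset.sum_involution (fun k _ ↦ k ^^^ 2 ^ ℓ) (fun k _ ↦ ?_) (fun k _ _ h ↦ ?_)
    (fun k hk ↦ ?_) (fun k _ ↦ by simp)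
  · rw [bitDot_xor_two_pow, hv, AddChar.map_add_eq_mul, signChar_one]
    ring
  · simpa using congrArg (Nat.testBit · ℓ) h
  · rw [mem_indexBlock] at hk ⊢
    rw [← hk]
    refine Nat.eq_of_testBit_eq fun a ↦ ?_
    rw [Nat.testBit_div_two_pow, Nat.testBit_div_two_pow, Nat.testBit_xor, Nat.testBit_two_pow]
    simp [show ℓ ≠ a + n by omega]

/-- The order `α` weight of a set of `0`-based row indices: the largest sum of at most `α` of the
corresponding `1`-based indices. -/
def orderWeight (α : ℕ) (T : Finset ℕ) : ℕ :=
  (T.powerset.filter fun U ↦ U.card ≤ α).sup fun U ↦ ∑ x ∈ U, (x + 1)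

theorem sum_add_one_le_orderWeight {α : ℕ} {T U : Finset ℕ} (hU : U ⊆ T) (hcard : U.card ≤ α) :
    ∑ x ∈ U, (x + 1) ≤ orderWeight α T :=
  Finset.le_sup (f := fun U : Finset ℕ ↦ ∑ x ∈ U, (x + 1))
    (Finset.mem_filter.2 ⟨Finset.mem_powerset.2 hU, hcard⟩)

theorem orderWeight_le_iff {α B : ℕ} {T : Finset ℕ} :
    orderWeight α T ≤ B ↔ ∀ U ⊆ T, U.card ≤ α → ∑ x ∈ U, (x + 1) ≤ B := by
  simp [orderWeight, Finset.sup_le_iff, and_imp]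

theorem sum_fin_lt_le_orderWeight {α ν : ℕ} {T : Finset ℕ} {r : Fin ν → ℕ} (hr : r.Injective)
    (hrT : ∀ l, r l ∈ T) :
    ∑ l ∈ Finset.univ.filter (fun l : Fin ν ↦ (l : ℕ) < α), (r l + 1) ≤ orderWeight α T := by
  rw [← Finset.sum_image (f := fun x ↦ x + 1) hr.injOn]
  refine sum_add_one_le_orderWeight (Finset.image_subset_iff.2 fun l _ ↦ hrT l) ?_
  refine Finset.card_image_le.trans ?_
  rw [Fin.card_filter_val_lt]
  exact min_le_right _ _

theorem orderWeight_mono (α : ℕ) {S T : Finset ℕ} (h : S ⊆ T) :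
    orderWeight α S ≤ orderWeight α T :=
  orderWeight_le_iff.2 fun _ hU ↦ sum_add_one_le_orderWeight (hU.trans h)

theorem orderWeight_range_le (α c : ℕ) : orderWeight α (Finset.range c) ≤ α * c := by
  refine orderWeight_le_iff.2 fun U hU hcard ↦ ?_
  calc ∑ x ∈ U, (x + 1) ≤ U.card * c :=
        Finset.sum_le_card_nsmul _ _ _ fun x hx ↦ Finset.mem_range.1 (hU hx)
    _ ≤ α * c := by gcongr

theorem orderWeight_insert_le {α a : ℕ} {T : Finset ℕ} (ha : ∀ x ∈ T, x ≤ a) :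
    orderWeight (α + 1) (insert a T) ≤ a + 1 + orderWeight α T := by
  refine orderWeight_le_iff.2 fun U hU hcard ↦ ?_
  rcases U.eq_empty_or_nonempty with rfl | hne
  · simp
  have hmax_mem := U.max'_mem hne
  have hmax : U.max' hne ≤ a := by
    rcases Finset.mem_insert.1 (hU hmax_mem) with h | h
    exacts [h.le, ha _ h]
  have herase : U.erase (U.max' hne) ⊆ T := fun x hx ↦ by
    obtain ⟨hxmax, hx⟩ := Finset.mem_erase.1 hx
    refine (Finset.mem_insert.1 (hU hx)).resolve_left fun hxa ↦ hxmax ?_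
    exact (U.le_max' x hx).antisymm (hmax.trans hxa.ge)
  rw [← Finset.add_sum_erase U (fun x ↦ x + 1) hmax_mem]
  refine add_le_add (by omega) (sum_add_one_le_orderWeight herase ?_)
  rw [Finset.card_erase_of_mem hmax_mem]
  omega

theorem orderWeight_two_haarWalshSupport_le {j : ℤ} (hj : -1 ≤ j) (b : ℕ) :
    orderWeight 2 (Finset.range j.toNat ∪ haarWalshSupport j b) ≤ 2 * j.toNat + b + 2 := by
  rcases b with _ | b
  · rw [haarWalshSupport, Finset.union_empty]
    exact (orderWeight_range_le 2 _).trans (by omega)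
  · have hsub : Finset.range j.toNat ∪ haarWalshSupport j (b + 1) ⊆
        insert ((j + 1).toNat + b) (Finset.range (j + 1).toNat) := by
      intro x
      simp only [haarWalshSupport, Finset.mem_union, Finset.mem_insert, Finset.mem_range,
        Finset.mem_Ico]
      omega
    calc orderWeight 2 (Finset.range j.toNat ∪ haarWalshSupport j (b + 1))
        ≤ (j + 1).toNat + b + 1 + orderWeight 1 (Finset.range (j + 1).toNat) :=
          (orderWeight_mono 2 hsub).trans
            (orderWeight_insert_le fun x hx ↦ by rw [Finset.mem_range] at hx; omega)
      _ ≤ (j + 1).toNat + b + 1 + 1 * (j + 1).toNat := by gcongr; exact orderWeight_range_le 1 _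
      _ ≤ 2 * j.toNat + (b + 1) + 2 := by omega

theorem toNat_le_of_mem_haarWalshSupport {j : ℤ} {b x : ℕ} (hx : x ∈ haarWalshSupport j b) :
    j.toNat ≤ x := by
  rcases b with _ | b
  · simp [haarWalshSupport] at hx
  · simp only [haarWalshSupport, Finset.mem_insert, Finset.mem_Ico] at hx
    omega

theorem haarWalshSupport_nonempty {j : ℤ} {b : ℕ} (hb : b ≠ 0) :
    (haarWalshSupport j b).Nonempty := by
  obtain ⟨b, rfl⟩ := Nat.exists_eq_succ_of_ne_zero hb
  exact Finset.insert_nonempty _ _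

section Net

variable {α n t q d : ℕ} {E : Fin d → ℕ → ℕ → ZMod 2}

theorem exists_sum_rows_eq_one (hE : IsOrderNet α n t q d E) (hα : 0 < α) (hq : α * n - t ≤ q)
    {T : Fin d → Finset ℕ} (hT : ∑ i, orderWeight α (T i) ≤ α * n - t)
    (hne : ∃ i, (T i).Nonempty) : ∃ ℓ < n, ∑ i, ∑ x ∈ T i, E i x ℓ = 1 := by
  let r (i : Fin d) (l : Fin (T i).card) : ℕ := (T i).orderEmbOfFin rfl (Fin.rev l)
  have hr_anti (i : Fin d) : StrictAnti (r i) :=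
    fun a b hab ↦ (OrderEmbedding.strictMono _) (Fin.rev_lt_rev.2 hab)
  have hr_mem (i : Fin d) (l : Fin (T i).card) : r i l ∈ T i := Finset.orderEmbOfFin_mem _ _ _
  have hr_lt (i : Fin d) (l : Fin (T i).card) : r i l < q := by
    have hsingle := sum_add_one_le_orderWeight (Finset.singleton_subset_iff.2 (hr_mem i l))
      (by rwa [Finset.card_singleton] : ({r i l} : Finset ℕ).card ≤ α)
    have hle := Finset.single_le_sum (f := fun i ↦ orderWeight α (T i)) (fun _ _ ↦ Nat.zero_le _)
      (Finset.mem_univ i)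
    simp only [Finset.sum_singleton] at hsingle hle
    omega
  have hr_sum (i : Fin d) (ℓ : ℕ) : ∑ l, E i (r i l) ℓ = ∑ x ∈ T i, E i x ℓ := by
    rw [← Finset.sum_image (f := fun x ↦ E i x ℓ) (s := Finset.univ) (hr_anti i).injective.injOn]
    congr 1
    refine Finset.eq_of_subset_of_card_le (Finset.image_subset_iff.2 fun l _ ↦ hr_mem i l) ?_
    rw [Finset.card_image_of_injective _ (hr_anti i).injective, Finset.card_fin]
  have hindep := Fintype.linearIndependent_iff.1
    (hE _ r hr_anti hr_lt ((Finset.sum_le_sum fun i _ ↦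
      sum_fin_lt_le_orderWeight (hr_anti i).injective (hr_mem i)).trans hT))
  by_contra! hsum
  obtain ⟨i, hi⟩ := hne
  refine one_ne_zero (hindep (fun _ ↦ 1) (funext fun ℓ ↦ ?_) ⟨i, ⟨0, Finset.card_pos.2 hi⟩⟩)
  simp only [one_smul, Finset.sum_apply, Fintype.sum_sigma, hr_sum, Pi.zero_apply]
  have htwo (a : ZMod 2) : a ≠ 1 → a = 0 := by decide +revert
  exact htwo _ (hsum ℓ ℓ.2)

/-- The binary digits of the `i`-th coordinate of the `k`-th point of the digital sequence
generated by `E`. -/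
def pointDigits (E : Fin d → ℕ → ℕ → ZMod 2) (k : ℕ) (i : Fin d) (x : ℕ) : ZMod 2 :=
  bitDot (E i x) k

theorem digitalSeq_eq_binaryVal (E : Fin d → ℕ → ℕ → ZMod 2) (k : ℕ) (i : Fin d) :
    digitalSeq d E k i = binaryVal (pointDigits E k i) :=
  (binaryVal_eq_tsum _).symm

theorem sum_indexBlock_prod_signChar_eq_zero (hE : IsOrderNet α n t q d E) (hα : 0 < α)
    (hq : α * n - t ≤ q) {T : Fin d → Finset ℕ} (hT : ∑ i, orderWeight α (T i) ≤ α * n - t)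
    (hne : ∃ i, (T i).Nonempty) (c : ℕ) :
    ∑ k ∈ indexBlock c n, ∏ i, signChar (∑ x ∈ T i, pointDigits E k i x) = 0 := by
  obtain ⟨ℓ, hℓ, hsum⟩ := exists_sum_rows_eq_one hE hα hq hT hne
  rw [← sum_indexBlock_signChar_bitDot_eq_zero (v := fun ℓ ↦ ∑ i, ∑ x ∈ T i, E i x ℓ) hℓ hsum c]
  refine Finset.sum_congr rfl fun k _ ↦ ?_
  rw [← signChar_sum, bitDot_sum]
  simp only [bitDot_sum, pointDigits]

/-- The proof expands the indicator of the dyadic box into Walsh functions. -/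
theorem sum_indexBlock_prod_prefixInd_mul_signChar (hE : IsOrderNet α n t q d E) (hα : 0 < α)
    (hq : α * n - t ≤ q) {J m : Fin d → ℕ} (hm : ∀ i, m i < 2 ^ J i) {T : Fin d → Finset ℕ}
    (hJ : ∀ i, ∀ x ∈ T i, J i ≤ x)
    (hT : ∑ i, orderWeight α (Finset.range (J i) ∪ T i) ≤ α * n - t) (c : ℕ) :
    ∑ k ∈ indexBlock c n, ∏ i, (prefixInd (J i) (m i) (pointDigits E k i) *
        signChar (∑ x ∈ T i, pointDigits E k i x)) =
      if ∃ i, (T i).Nonempty then 0 else 2 ^ n * ∏ i, (1 / 2) ^ J i := by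
  choose η hη using fun i ↦ exists_prefixInd_eq_sum_signChar (hm i)
  have hexpand (k : ℕ) (i : Fin d) : prefixInd (J i) (m i) (pointDigits E k i) *
      signChar (∑ x ∈ T i, pointDigits E k i x) =
        ∑ S ∈ (Finset.range (J i)).powerset, (1 / 2) ^ J i * signChar (∑ x ∈ S, η i x) *
          signChar (∑ x ∈ S ∪ T i, pointDigits E k i x) := by
    rw [hη, mul_assoc, Finset.sum_mul, Finset.mul_sum]
    refine Finset.sum_congr rfl fun S hS ↦ ?_
    have hdisj : Disjoint S (T i) := Finset.disjoint_left.2 fun x hxS hxT ↦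
      (Finset.mem_range.1 (Finset.mem_powerset.1 hS hxS)).not_ge (hJ i x hxT)
    rw [Finset.sum_union hdisj, AddChar.map_add_eq_mul]
    ring
  have hvanish {S : Fin d → Finset ℕ}
      (hS : S ∈ Fintype.piFinset fun i ↦ (Finset.range (J i)).powerset)
      (hne : ∃ i, (S i ∪ T i).Nonempty) :
      ∑ k ∈ indexBlock c n, ∏ i, signChar (∑ x ∈ S i ∪ T i, pointDigits E k i x) = 0 := by
    refine sum_indexBlock_prod_signChar_eq_zero hE hα hq (le_trans ?_ hT) hne c
    refine Finset.sum_le_sum fun i _ ↦ orderWeight_mono α (Finset.union_subset_union_left ?_)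
    exact Finset.mem_powerset.1 (Fintype.mem_piFinset.1 hS i)
  simp only [hexpand, Finset.prod_univ_sum, Finset.prod_mul_distrib]
  rw [Finset.sum_comm]
  simp only [← Finset.mul_sum]
  split_ifs with hne
  · obtain ⟨i, hi⟩ := hne
    exact Finset.sum_eq_zero fun S hS ↦ by
      rw [hvanish hS ⟨i, hi.mono Finset.subset_union_right⟩, mul_zero]
  · simp only [not_exists, Finset.not_nonempty_iff_eq_empty] at hne
    rw [Finset.sum_eq_single_of_mem (fun _ ↦ ∅) (Fintype.mem_piFinset.2 fun _ ↦ by simp)]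
    · simp [hne, card_indexBlock, mul_comm]
    · intro S hS hS_ne
      obtain ⟨i, hi⟩ := Function.ne_iff.1 hS_ne
      rw [hvanish hS ⟨i, (Finset.nonempty_iff_ne_empty.2 hi).mono Finset.subset_union_left⟩,
        mul_zero]

theorem sum_indexBlock_prod_prefixInd (hE : IsOrderNet α n t q d E) (hα : 0 < α)
    (hq : α * n - t ≤ q) {J m : Fin d → ℕ} (hm : ∀ i, m i < 2 ^ J i)
    (hJ : α * ∑ i, J i ≤ α * n - t) (c : ℕ) :
    ∑ k ∈ indexBlock c n, ∏ i, prefixInd (J i) (m i) (pointDigits E k i) =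
      2 ^ n * ∏ i, (1 / 2) ^ J i := by
  have hweight : ∑ i, orderWeight α (Finset.range (J i) ∪ ∅) ≤ α * n - t := by
    refine le_trans ?_ hJ
    rw [Finset.mul_sum]
    exact Finset.sum_le_sum fun i _ ↦ by
      rw [Finset.union_empty]
      exact orderWeight_range_le α (J i)
  simpa using sum_indexBlock_prod_prefixInd_mul_signChar hE hα hq hm (T := fun _ ↦ ∅) (by simp)
    hweight c

end Net

/-! ### Polynomial-geometric sums -/

/-- The series `∑ (2v+2)^e 2^{-v}`, which controls the tails of `∑ v^e 2^{-v}`. -/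
def polyGeomSeries (e : ℕ) : ℝ := ∑' v : ℕ, (2 * (v : ℝ) + 2) ^ e * (1 / 2) ^ v

theorem summable_polyGeomSeries (e : ℕ) :
    Summable fun v : ℕ ↦ (2 * (v : ℝ) + 2) ^ e * (1 / 2) ^ v := by
  have hshift := (summable_nat_add_iff 1).2
    (summable_pow_mul_geometric_of_norm_lt_one e (r := (1 / 2 : ℝ)) (by norm_num))
  refine (hshift.mul_left (2 ^ e * 2)).congr fun v ↦ ?_
  push_cast
  rw [show 2 * (v : ℝ) + 2 = 2 * (v + 1) by ring, mul_pow]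
  ring

theorem polyGeomSeries_nonneg (e : ℕ) : 0 ≤ polyGeomSeries e := tsum_nonneg fun _ ↦ by positivity

theorem sum_le_polyGeomSeries (e : ℕ) (s : Finset ℕ) :
    ∑ v ∈ s, (2 * (v : ℝ) + 2) ^ e * (1 / 2) ^ v ≤ polyGeomSeries e :=
  (summable_polyGeomSeries e).sum_le_tsum s fun _ _ ↦ by positivity

theorem card_le_pow_of_sum_eq {d s : ℕ} {B : Finset (Fin d → ℕ)} (hB : ∀ b ∈ B, ∑ i, b i = s) :
    B.card ≤ (s + 1) ^ (d - 1) := by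
  rcases d with _ | d
  · exact Finset.card_le_one_of_subsingleton B
  calc B.card ≤ (Fintype.piFinset fun _ : Fin d ↦ Finset.range (s + 1)).card := by
        refine Finset.card_le_card_of_injOn Fin.tail (fun b hb ↦ ?_) fun b hb b' hb' htail ↦ ?_
        · refine Fintype.mem_piFinset.2 fun i ↦ Finset.mem_range_succ_iff.2 ?_
          rw [← hB b hb]
          exact Finset.single_le_sum (fun _ _ ↦ Nat.zero_le _) (Finset.mem_univ i.succ)
        · have hsum := (hB b hb).trans (hB b' hb').symm
          rw [Fin.sum_univ_succ, Fin.sum_univ_succ] at hsum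
          have hhead : b 0 = b' 0 := by
            have htail_sum := congrArg (fun g : Fin d → ℕ ↦ ∑ i, g i) htail
            simp only [Fin.tail] at htail_sum
            omega
          rw [← Fin.cons_self_tail b, ← Fin.cons_self_tail b', htail, hhead]
    _ = (s + 1) ^ (d + 1 - 1) := by simp

theorem sum_half_pow_sum_le {d a X : ℕ} (hX : 1 ≤ X) {B : Finset (Fin d → ℕ)}
    (hB : ∀ b ∈ B, X ≤ ∑ i, b i + a) :
    ∑ b ∈ B, (1 / 2 : ℝ) ^ ∑ i, b i ≤
      2 ^ a * polyGeomSeries (d - 1) * (X : ℝ) ^ (d - 1) * (1 / 2) ^ X := by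
  let v (b : Fin d → ℕ) : ℕ := ∑ i, b i + a - X
  have hfiber (w : ℕ) : ∑ b ∈ B with v b = w, (1 / 2 : ℝ) ^ ∑ i, b i ≤
      2 ^ a * (X : ℝ) ^ (d - 1) * (1 / 2) ^ X * ((2 * (w : ℝ) + 2) ^ (d - 1) * (1 / 2) ^ w) := by
    have hsum {b : Fin d → ℕ} (hb : b ∈ B.filter (v · = w)) : ∑ i, b i + a = X + w := by
      obtain ⟨hbB, hbw⟩ := Finset.mem_filter.1 hb
      have := hB b hbB
      dsimp only [v] at hbw
      omega
    have hcard : ((B.filter (v · = w)).card : ℝ) ≤ (X * (2 * w + 2)) ^ (d - 1) := by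
      have hnat := card_le_pow_of_sum_eq (s := X + w - a) (B := B.filter (v · = w))
        fun b hb ↦ by have := hsum hb; omega
      refine (Nat.cast_le.2 hnat).trans ?_
      have hle : X + w - a + 1 ≤ X * (2 * w + 2) := by
        have := Nat.le_mul_of_pos_left w hX
        have hring : X * (2 * w + 2) = 2 * (X * w) + 2 * X := by ring
        omega
      exact_mod_cast Nat.pow_le_pow_left hle (d - 1)
    have hterm {b : Fin d → ℕ} (hb : b ∈ B.filter (v · = w)) :
        (1 / 2 : ℝ) ^ ∑ i, b i = 2 ^ a * (1 / 2) ^ X * (1 / 2) ^ w := by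
      rw [mul_assoc, ← pow_add, ← hsum hb, pow_add, mul_left_comm, ← mul_pow]
      norm_num
    rw [Finset.sum_congr rfl fun b hb ↦ hterm hb, Finset.sum_const, nsmul_eq_mul]
    calc _ ≤ ((X : ℝ) * (2 * w + 2)) ^ (d - 1) * (2 ^ a * (1 / 2) ^ X * (1 / 2) ^ w) := by gcongr
      _ = _ := by rw [mul_pow]; ring
  rw [← Finset.sum_fiberwise_of_maps_to fun b hb ↦ Finset.mem_image_of_mem v hb]
  calc _ ≤ _ := Finset.sum_le_sum fun w _ ↦ hfiber w
    _ ≤ 2 ^ a * (X : ℝ) ^ (d - 1) * (1 / 2) ^ X * polyGeomSeries (d - 1) := by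
      rw [← Finset.mul_sum]
      gcongr
      exact sum_le_polyGeomSeries _ _
    _ = _ := by ring

theorem sum_shifted_pow_mul_half_pow_le {c : ℝ} {n : ℕ} (e : ℕ) (hn : 1 ≤ 2 * n - c) {s : Finset ℕ}
    (hs : ∀ p ∈ s, n ≤ p) :
    ∑ p ∈ s, (2 * (p : ℝ) - c) ^ e * (1 / 2) ^ p ≤
      polyGeomSeries e * (2 * n - c) ^ e * (1 / 2) ^ n := by
  calc ∑ p ∈ s, (2 * (p : ℝ) - c) ^ e * (1 / 2) ^ p
      ≤ ∑ p ∈ s, (2 * n - c) ^ e * (1 / 2) ^ n *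
          ((2 * ((p - n : ℕ) : ℝ) + 2) ^ e * (1 / 2) ^ (p - n)) := by
        refine Finset.sum_le_sum fun p hp ↦ ?_
        obtain ⟨v, rfl⟩ := Nat.exists_eq_add_of_le (hs p hp)
        rw [Nat.add_sub_cancel_left, mul_mul_mul_comm, ← mul_pow, ← pow_add]
        push_cast
        gcongr
        · linarith [v.cast_nonneg (α := ℝ)]
        · nlinarith [v.cast_nonneg (α := ℝ)]
    _ = (2 * n - c) ^ e * (1 / 2) ^ n *
          ∑ v ∈ s.image (· - n), (2 * (v : ℝ) + 2) ^ e * (1 / 2) ^ v := by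
        rw [Finset.mul_sum, Finset.sum_image]
        intro p hp q hq hpq
        have := hs p hp
        have := hs q hq
        dsimp only at hpq
        omega
    _ ≤ (2 * n - c) ^ e * (1 / 2) ^ n * polyGeomSeries e := by
        gcongr
        exact sum_le_polyGeomSeries e _
    _ = _ := by ring

/-! ### Haar coefficients of blocks of points -/

/-- The Haar coefficient at `(j, m)` of the local discrepancy of the one-point set `{z}`. -/
def pointHaarCoeff {d : ℕ} (j : Fin d → ℤ) (m : Fin d → ℕ) (z : Fin d → ℝ) : ℝ :=
  ∏ i, haarTailIntegral (j i) (m i) (z i) - ∏ i, haarFirstMoment (j i) (m i)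

theorem discSeq_mul_haarFn (d : ℕ) (S : ℕ → Fin d → ℝ) {N : ℕ} (j : Fin d → ℤ)
    (m : Fin d → ℕ) (x : Fin d → ℝ) :
    discSeq d S N x * haarFn d j m x =
      (∑ k ∈ Finset.range N, ∏ i, (if S k i < x i then 1 else 0) * haar1 (j i) (m i) (x i)) / N -
        ∏ i, x i * haar1 (j i) (m i) (x i) := by
  classical
  have hcount : (Nat.card {k : Fin N // ∀ i, S k i < x i} : ℝ) =
      ∑ k ∈ Finset.range N, ∏ i, if S k i < x i then 1 else 0 := by
    rw [Nat.card_eq_fintype_card, Fintype.card_subtype, Finset.card_filter, Finset.sum_range]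
    push_cast
    exact Finset.sum_congr rfl fun k _ ↦ by simp [Finset.prod_boole]
  simp only [discSeq, haarFn, hcount, sub_mul, div_mul_eq_mul_div, Finset.sum_mul,
    Finset.prod_mul_distrib]

theorem haarCoeff_discSeq (d : ℕ) (S : ℕ → Fin d → ℝ) {N : ℕ} (hN : N ≠ 0) (j : Fin d → ℤ)
    (m : Fin d → ℕ) :
    haarCoeff d (discSeq d S N) j m =
      (∑ k ∈ Finset.range N, pointHaarCoeff j m (S k)) / N := by
  have hcube : (volume : Measure (Fin d → ℝ)).restrict (unitCube d) =
      Measure.pi fun _ ↦ (volume : Measure ℝ).restrict (Set.Icc (0 : ℝ) 1) := by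
    rw [unitCube, volume_pi, Measure.restrict_pi_pi]
  have hstep (k : ℕ) : Integrable
      (fun x : Fin d → ℝ ↦ ∏ i, (if S k i < x i then 1 else 0) * haar1 (j i) (m i) (x i))
      (Measure.pi fun _ ↦ (volume : Measure ℝ).restrict (Set.Icc (0 : ℝ) 1)) :=
    Integrable.fintype_prod
      (f := fun i x ↦ (if S k i < x then 1 else 0) * haar1 (j i) (m i) x)
      fun i ↦ integrableOn_mul_haar1 ((monotone_ite_lt (S k i)).monotoneOn _) (j i) (m i)
  have hid : Integrable (fun x : Fin d → ℝ ↦ ∏ i, x i * haar1 (j i) (m i) (x i))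
      (Measure.pi fun _ ↦ (volume : Measure ℝ).restrict (Set.Icc (0 : ℝ) 1)) :=
    Integrable.fintype_prod (f := fun i x ↦ x * haar1 (j i) (m i) x)
      fun i ↦ integrableOn_mul_haar1 (monotone_id.monotoneOn _) (j i) (m i)
  simp only [haarCoeff, discSeq_mul_haarFn]
  rw [hcube, integral_sub ((integrable_finsetSum _ fun k _ ↦ hstep k).div_const _) hid,
    integral_div, integral_finsetSum _ fun k _ ↦ hstep k,
    integral_fintype_prod_eq_prod fun i x ↦ x * haar1 (j i) (m i) x]
  have hprod (k : ℕ) := integral_fintype_prod_eq_prod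
    (μ := fun _ ↦ (volume : Measure ℝ).restrict (Set.Icc (0 : ℝ) 1))
    fun i x ↦ (if S k i < x then (1 : ℝ) else 0) * haar1 (j i) (m i) x
  simp only [hprod, pointHaarCoeff, Finset.sum_sub_distrib, Finset.sum_const, Finset.card_range,
    nsmul_eq_mul, sub_div, haarTailIntegral, haarFirstMoment]
  rw [mul_div_cancel_left₀ _ (Nat.cast_ne_zero.2 hN)]

section Block

variable {n t q d : ℕ} {E : Fin d → ℕ → ℕ → ZMod 2} {j : Fin d → ℤ} {m : Fin d → ℕ}

/-- The contribution of the Walsh functions with index `b` to the sum of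
`∏ i, haarTailIntegral (j i) (m i)` over the points of the digital sequence with index in
`indexBlock c n`. -/
def walshBlockTerm (E : Fin d → ℕ → ℕ → ZMod 2) (j : Fin d → ℤ) (m : Fin d → ℕ) (n c : ℕ)
    (b : Fin d → ℕ) : ℝ :=
  (∏ i, haarWalshCoeff (j i) (b i)) * ∑ k ∈ indexBlock c n,
    ∏ i, (prefixInd (j i).toNat (m i) (pointDigits E k i) *
      signChar (∑ x ∈ haarWalshSupport (j i) (b i), pointDigits E k i x))

theorem tendsto_sum_walshBlockTerm (E : Fin d → ℕ → ℕ → ZMod 2) (hj : ∀ i, -1 ≤ j i)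
    (hm : ∀ i, m i < 2 ^ (j i).toNat) (n c : ℕ) :
    Filter.Tendsto
      (fun L ↦ ∑ b ∈ Fintype.piFinset fun _ ↦ Finset.range L, walshBlockTerm E j m n c b)
      Filter.atTop
      (nhds (∑ k ∈ indexBlock c n, ∏ i, haarTailIntegral (j i) (m i) (digitalSeq d E k i))) := by
  have hfactor (L : ℕ) :
      ∑ b ∈ Fintype.piFinset fun _ ↦ Finset.range L, walshBlockTerm E j m n c b =
        ∑ k ∈ indexBlock c n, ∏ i, ∑ b ∈ Finset.range L,
          prefixInd (j i).toNat (m i) (pointDigits E k i) * (haarWalshCoeff (j i) b *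
            signChar (∑ x ∈ haarWalshSupport (j i) b, pointDigits E k i x)) := by
    simp only [walshBlockTerm, Finset.mul_sum, Finset.prod_univ_sum]
    rw [Finset.sum_comm]
    simp only [← Finset.prod_mul_distrib, mul_left_comm]
  simp only [hfactor, digitalSeq_eq_binaryVal]
  exact tendsto_finsetSum _ fun k _ ↦ tendsto_finsetProd _ fun i _ ↦
    (hasSum_haarTailIntegral (hj i) (hm i) _).tendsto_sum_nat

theorem abs_walshBlockTerm_le (hE : IsOrderNet 2 n t q d E) (hq : 2 * n - t ≤ q)
    (hj : ∀ i, -1 ≤ j i) (hm : ∀ i, m i < 2 ^ (j i).toNat) (hn : 2 * jnorm d j ≤ 2 * n - t)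
    (c : ℕ) (b : Fin d → ℕ) :
    |walshBlockTerm E j m n c b| ≤
      2 ^ n * (1 / 2) ^ (2 * jnorm d j) * (1 / 2) ^ ∑ i, b i := by
  have hcoeff : |∏ i, haarWalshCoeff (j i) (b i)| ≤ (1 / 2) ^ jnorm d j * (1 / 2) ^ ∑ i, b i := by
    rw [Finset.abs_prod, jnorm, ← Finset.prod_pow_eq_pow_sum, ← Finset.prod_pow_eq_pow_sum,
      ← Finset.prod_mul_distrib]
    refine Finset.prod_le_prod (fun _ _ ↦ abs_nonneg _) fun i _ ↦
      (abs_haarWalshCoeff_le (hj i) (b i)).trans ?_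
    gcongr _ * ?_
    exact pow_le_pow_of_le_one (by norm_num) (by norm_num) (Nat.le_succ _)
  have hsum : |∑ k ∈ indexBlock c n, ∏ i, (prefixInd (j i).toNat (m i) (pointDigits E k i) *
      signChar (∑ x ∈ haarWalshSupport (j i) (b i), pointDigits E k i x))| ≤
        2 ^ n * (1 / 2) ^ jnorm d j := by
    rw [jnorm, ← Finset.prod_pow_eq_pow_sum, ← sum_indexBlock_prod_prefixInd hE two_pos hq hm hn c]
    refine (Finset.abs_sum_le_sum_abs _ _).trans_eq (Finset.sum_congr rfl fun k _ ↦ ?_)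
    simp only [Finset.abs_prod, abs_mul, abs_signChar, mul_one,
      abs_of_nonneg (prefixInd_nonneg _ _ _)]
  rw [walshBlockTerm, abs_mul]
  calc _ ≤ (1 / 2 : ℝ) ^ jnorm d j * (1 / 2) ^ (∑ i, b i) * (2 ^ n * (1 / 2) ^ jnorm d j) := by
        gcongr
    _ = _ := by ring

theorem walshBlockTerm_zero (hE : IsOrderNet 2 n t q d E) (hq : 2 * n - t ≤ q)
    (hj : ∀ i, -1 ≤ j i) (hm : ∀ i, m i < 2 ^ (j i).toNat) (hn : 2 * jnorm d j ≤ 2 * n - t)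
    (c : ℕ) : walshBlockTerm E j m n c 0 = 2 ^ n * ∏ i, haarFirstMoment (j i) (m i) := by
  simp only [walshBlockTerm, Pi.zero_apply, haarWalshSupport, Finset.sum_empty,
    AddChar.map_zero_eq_one, mul_one]
  rw [sum_indexBlock_prod_prefixInd hE two_pos hq hm hn c, mul_left_comm,
    ← Finset.prod_mul_distrib]
  simp only [haarFirstMoment_eq (hj _) (hm _)]

theorem walshBlockTerm_eq_zero (hE : IsOrderNet 2 n t q d E) (hq : 2 * n - t ≤ q)
    (hj : ∀ i, -1 ≤ j i) (hm : ∀ i, m i < 2 ^ (j i).toNat) {b : Fin d → ℕ} (hb : b ≠ 0)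
    (hn : 2 * jnorm d j + ∑ i, b i + 2 * d ≤ 2 * n - t) (c : ℕ) :
    walshBlockTerm E j m n c b = 0 := by
  have hweight : ∑ i, orderWeight 2
      (Finset.range (j i).toNat ∪ haarWalshSupport (j i) (b i)) ≤ 2 * n - t := by
    refine le_trans (Finset.sum_le_sum fun i _ ↦
      orderWeight_two_haarWalshSupport_le (hj i) (b i)) (le_trans (le_of_eq ?_) hn)
    simp [Finset.sum_add_distrib, jnorm, mul_comm, Finset.mul_sum]
  obtain ⟨i, hi⟩ := Function.ne_iff.1 hb
  rw [walshBlockTerm, sum_indexBlock_prod_prefixInd_mul_signChar hE two_pos hq hm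
    (fun i x ↦ toNat_le_of_mem_haarWalshSupport) hweight, if_pos ⟨i, haarWalshSupport_nonempty hi⟩,
    mul_zero]

theorem abs_sum_walshBlockTerm_le (hE : IsOrderNet 2 n t q d E) (hq : 2 * n - t ≤ q)
    (hj : ∀ i, -1 ≤ j i) (hm : ∀ i, m i < 2 ^ (j i).toNat) {X : ℕ} (hX : 1 ≤ X)
    (hn : 2 * jnorm d j + t + X = 2 * n) (c : ℕ) {B : Finset (Fin d → ℕ)} (hB : 0 ∉ B) :
    |∑ b ∈ B, walshBlockTerm E j m n c b| ≤
      4 ^ d * polyGeomSeries (d - 1) * 2 ^ t * ((X : ℝ) ^ (d - 1) * (1 / 2) ^ n) := by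
  have hscale : (2 : ℝ) ^ n * (1 / 2) ^ (2 * jnorm d j) * (1 / 2) ^ X = 2 ^ t * (1 / 2) ^ n := by
    have hpow : (2 : ℝ) ^ n * 2 ^ n = 2 ^ t * (2 ^ (2 * jnorm d j) * 2 ^ X) := by
      rw [← pow_add, ← pow_add, ← pow_add, ← two_mul, ← hn]
      ring
    simp only [one_div_pow]
    field_simp
    linarith
  rw [← Finset.sum_filter_of_ne (p := fun b ↦ X ≤ ∑ i, b i + 2 * d) fun b hb hne ↦ ?_]
  · calc _ ≤ ∑ b ∈ B with X ≤ ∑ i, b i + 2 * d,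
          2 ^ n * (1 / 2) ^ (2 * jnorm d j) * (1 / 2) ^ ∑ i, b i :=
          (Finset.abs_sum_le_sum_abs _ _).trans (Finset.sum_le_sum fun b _ ↦
            abs_walshBlockTerm_le hE hq hj hm (by omega) c b)
      _ ≤ 2 ^ n * (1 / 2) ^ (2 * jnorm d j) *
          (2 ^ (2 * d) * polyGeomSeries (d - 1) * (X : ℝ) ^ (d - 1) * (1 / 2) ^ X) := by
          rw [← Finset.mul_sum]
          gcongr
          exact sum_half_pow_sum_le hX fun b hb ↦ (Finset.mem_filter.1 hb).2
      _ = 2 ^ (2 * d) * polyGeomSeries (d - 1) * (X : ℝ) ^ (d - 1) *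
          (2 ^ n * (1 / 2) ^ (2 * jnorm d j) * (1 / 2) ^ X) := by ring
      _ = _ := by
          rw [hscale, pow_mul]
          norm_num
          ring
  · by_contra hlt
    exact hne (walshBlockTerm_eq_zero hE hq hj hm (ne_of_mem_of_not_mem hb hB) (by omega) c)

/-- The constant Walsh function cancels against the first moments. -/
theorem abs_sum_indexBlock_pointHaarCoeff_le (hE : IsOrderNet 2 n t q d E) (hq : 2 * n - t ≤ q)
    (hj : ∀ i, -1 ≤ j i) (hm : ∀ i, m i < 2 ^ (j i).toNat) {X : ℕ} (hX : 1 ≤ X)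
    (hn : 2 * jnorm d j + t + X = 2 * n) (c : ℕ) :
    |∑ k ∈ indexBlock c n, pointHaarCoeff j m (digitalSeq d E k)| ≤
      4 ^ d * polyGeomSeries (d - 1) * 2 ^ t * ((X : ℝ) ^ (d - 1) * (1 / 2) ^ n) := by
  have hsum : ∑ k ∈ indexBlock c n, pointHaarCoeff j m (digitalSeq d E k) =
      ∑ k ∈ indexBlock c n, ∏ i, haarTailIntegral (j i) (m i) (digitalSeq d E k i) -
        2 ^ n * ∏ i, haarFirstMoment (j i) (m i) := by
    simp [pointHaarCoeff, card_indexBlock]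
  rw [hsum]
  refine le_of_tendsto' (((tendsto_sum_walshBlockTerm E hj hm n c).comp
    (Filter.tendsto_add_atTop_nat 1)).sub_const (2 ^ n * ∏ i, haarFirstMoment (j i) (m i))).abs
    fun L ↦ ?_
  rw [← walshBlockTerm_zero hE hq hj hm (by omega) c, Function.comp_apply,
    ← Finset.sum_erase_eq_sub (Fintype.mem_piFinset.2 fun _ ↦ by simp)]
  exact abs_sum_walshBlockTerm_le hE hq hj hm hX hn c (Finset.notMem_erase 0 _)

theorem abs_pointHaarCoeff_le (E : Fin d → ℕ → ℕ → ZMod 2) (hj : ∀ i, -1 ≤ j i)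
    (hm : ∀ i, m i < 2 ^ (j i).toNat) (k : ℕ) :
    |pointHaarCoeff j m (digitalSeq d E k)| ≤
      (∏ i, prefixInd (j i).toNat (m i) (pointDigits E k i)) * (1 / 2) ^ jnorm d j +
        (1 / 2) ^ (2 * jnorm d j) := by
  refine (abs_sub _ _).trans (add_le_add ?_ ?_)
  · rw [Finset.abs_prod, jnorm, ← Finset.prod_pow_eq_pow_sum, ← Finset.prod_mul_distrib]
    refine Finset.prod_le_prod (fun _ _ ↦ abs_nonneg _) fun i _ ↦ ?_
    rw [digitalSeq_eq_binaryVal]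
    exact abs_haarTailIntegral_le (hj i) (hm i) _
  · rw [Finset.abs_prod, two_mul, pow_add, jnorm, ← Finset.prod_pow_eq_pow_sum,
      ← Finset.prod_mul_distrib]
    exact Finset.prod_le_prod (fun _ _ ↦ abs_nonneg _)
      fun i _ ↦ abs_haarFirstMoment_le (hj i) (hm i)

theorem abs_sum_pointHaarCoeff_le_of_subset_indexBlock (hE : IsOrderNet 2 n t q d E)
    (hq : 2 * n - t ≤ q) (hj : ∀ i, -1 ≤ j i) (hm : ∀ i, m i < 2 ^ (j i).toNat)
    (hn : 2 * jnorm d j ≤ 2 * n - t) {c : ℕ} {s : Finset ℕ} (hs : s ⊆ indexBlock c n) :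
    |∑ k ∈ s, pointHaarCoeff j m (digitalSeq d E k)| ≤
      2 * (2 ^ n * (1 / 2) ^ (2 * jnorm d j)) := by
  calc |∑ k ∈ s, pointHaarCoeff j m (digitalSeq d E k)|
      ≤ ∑ k ∈ indexBlock c n, |pointHaarCoeff j m (digitalSeq d E k)| :=
        (Finset.abs_sum_le_sum_abs _ _).trans
          (Finset.sum_le_sum_of_subset_of_nonneg hs fun _ _ _ ↦ abs_nonneg _)
    _ ≤ ∑ k ∈ indexBlock c n,
          ((∏ i, prefixInd (j i).toNat (m i) (pointDigits E k i)) * (1 / 2) ^ jnorm d j +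
            (1 / 2) ^ (2 * jnorm d j)) :=
        Finset.sum_le_sum fun k _ ↦ abs_pointHaarCoeff_le E hj hm k
    _ = 2 * (2 ^ n * (1 / 2) ^ (2 * jnorm d j)) := by
        rw [Finset.sum_add_distrib, ← Finset.sum_mul,
          sum_indexBlock_prod_prefixInd hE two_pos hq hm hn, Finset.prod_pow_eq_pow_sum,
          Finset.sum_const, card_indexBlock, nsmul_eq_mul, jnorm]
        push_cast
        ring

end Block

/-! ### Splitting along the binary digits of `N` -/

theorem norm_sum_range_sum_two_pow_le {V : Type*} [SeminormedAddCommGroup V] {f : ℕ → V}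
    {g : ℕ → ℝ} {s : Finset ℕ} (hf : ∀ p ∈ s, ∀ c, ‖∑ k ∈ indexBlock c p, f k‖ ≤ g p) :
    ‖∑ k ∈ Finset.range (∑ p ∈ s, 2 ^ p), f k‖ ≤ ∑ p ∈ s, g p := by
  induction s using Finset.induction_on_min with
  | empty => simp
  | insert a s ha ih =>
    have ha_notMem : a ∉ s := fun h ↦ (ha a h).false
    obtain ⟨c, hc⟩ : 2 ^ a ∣ ∑ p ∈ s, 2 ^ p :=
      Finset.dvd_sum fun p hp ↦ pow_dvd_pow 2 (ha p hp).le
    have hblock : Finset.Ico (∑ p ∈ s, 2 ^ p) (2 ^ a + ∑ p ∈ s, 2 ^ p) = indexBlock c a := by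
      rw [indexBlock, hc, add_one_mul, mul_comm, add_comm]
    rw [Finset.sum_insert ha_notMem, Finset.sum_insert ha_notMem,
      ← Finset.sum_range_add_sum_Ico f (Nat.le_add_left _ _), hblock, add_comm (g a)]
    exact (norm_add_le _ _).trans (add_le_add (ih fun p hp ↦ hf p (Finset.mem_insert_of_mem hp))
      (hf a (Finset.mem_insert_self a s) c))

theorem Ico_sum_two_pow_subset_indexBlock (s : Finset ℕ) (q : ℕ) : ∃ c,
    Finset.Ico (∑ p ∈ s with q ≤ p, 2 ^ p) (∑ p ∈ s, 2 ^ p) ⊆ indexBlock c q := by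
  obtain ⟨c, hc⟩ : 2 ^ q ∣ ∑ p ∈ s with q ≤ p, 2 ^ p :=
    Finset.dvd_sum fun p hp ↦ pow_dvd_pow 2 (Finset.mem_filter.1 hp).2
  have hlow : ∑ p ∈ s with ¬ q ≤ p, 2 ^ p < 2 ^ q :=
    Nat.geomSum_lt le_rfl fun p hp ↦ not_le.1 (Finset.mem_filter.1 hp).2
  refine ⟨c, ?_⟩
  rw [← Finset.sum_filter_add_sum_filter_not s (q ≤ ·) (2 ^ ·), hc, indexBlock, add_one_mul,
    mul_comm c]
  exact Finset.Ico_subset_Ico_right (by omega)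

/-- The binary digits of `N = ∑ p ∈ s, 2 ^ p` above the critical level split the points into
blocks that are nets; the remaining points lie in a single block of the critical level. -/
theorem abs_sum_range_pointHaarCoeff_le {d t : ℕ} {E : Fin d → ℕ → ℕ → ZMod 2}
    (hE : IsOrderSeq 2 t d E) {j : Fin d → ℤ} (hj : ∀ i, -1 ≤ j i) {m : Fin d → ℕ}
    (hm : ∀ i, m i < 2 ^ (j i).toNat) (s : Finset ℕ) :
    |∑ k ∈ Finset.range (∑ p ∈ s, 2 ^ p), pointHaarCoeff j m (digitalSeq d E k)| ≤
      4 ^ d * polyGeomSeries (d - 1) * 2 ^ t * (∑ p ∈ s with 2 * jnorm d j + t < 2 * p,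
        (2 * (p : ℝ) - (2 * jnorm d j + t : ℕ)) ^ (d - 1) * (1 / 2) ^ p) +
      4 * 2 ^ t * (1 / 2) ^ jnorm d j := by
  obtain ⟨q, hq⟩ : ∃ q, q = jnorm d j + t / 2 + 1 := ⟨_, rfl⟩
  obtain ⟨c, hc⟩ := Ico_sum_two_pow_subset_indexBlock s q
  have hfilter : s.filter (2 * jnorm d j + t < 2 * ·) = s.filter (q ≤ ·) :=
    Finset.filter_congr fun p _ ↦ by omega
  rw [hfilter, ← Finset.sum_range_add_sum_Ico _
    (Finset.sum_le_sum_of_subset (Finset.filter_subset (q ≤ ·) s))]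
  refine (abs_add_le _ _).trans (add_le_add ?_ ?_)
  · rw [Finset.mul_sum, ← Real.norm_eq_abs]
    refine norm_sum_range_sum_two_pow_le fun p hp c ↦ ?_
    have hqp := (Finset.mem_filter.1 hp).2
    have hbound := abs_sum_indexBlock_pointHaarCoeff_le (hE p (by omega)) (Nat.sub_le _ _) hj hm
      (X := 2 * p - (2 * jnorm d j + t)) (by omega) (by omega) c
    rwa [Nat.cast_sub (by omega), Nat.cast_mul, Nat.cast_two] at hbound
  · refine (abs_sum_pointHaarCoeff_le_of_subset_indexBlock (hE q (by omega)) (Nat.sub_le _ _) hj hm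
      (by omega) hc).trans ?_
    have hpow : (2 : ℝ) ^ q * (1 / 2) ^ (2 * jnorm d j) =
        2 * 2 ^ (t / 2) * (1 / 2) ^ jnorm d j := by
      rw [hq, pow_add, pow_add, pow_mul', sq]
      simp only [one_div_pow]
      field_simp
    have hhalf : (2 : ℝ) ^ (t / 2) ≤ 2 ^ t :=
      pow_le_pow_right₀ one_le_two (Nat.div_le_self t 2)
    calc 2 * ((2 : ℝ) ^ q * (1 / 2) ^ (2 * jnorm d j))
        = 4 * 2 ^ (t / 2) * (1 / 2) ^ jnorm d j := by rw [hpow]; ring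
      _ ≤ _ := by gcongr

theorem exists_nExt_eq_and_le {r μ c : ℕ} {n : Fin r → ℕ} (hn : Monotone n) (hμ : μ ≤ r)
    (hprev : nPrev r n μ ≤ (c : ℝ) / 2) (N : ℕ) {i : Fin r} (hi : c < 2 * n i) :
    ∃ a : ℕ, nExt r n N μ = a ∧ a ≤ n i := by
  have hμi : μ ≤ i := by
    by_contra! hlt
    rw [nPrev, dif_pos ⟨by omega, hμ⟩, le_div_iff₀ two_pos] at hprev
    have hle : n i ≤ n ⟨μ - 1, by omega⟩ := hn (Fin.mk_le_mk.2 (by omega))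
    have hcast : n ⟨μ - 1, by omega⟩ * 2 ≤ c := by exact_mod_cast hprev
    omega
  exact ⟨n ⟨μ, by omega⟩, dif_pos (by omega), hn hμi⟩

theorem sum_image_pow_mul_half_pow_le (e : ℕ) {r μ c : ℕ} {n : Fin r → ℕ} (hn : Monotone n)
    (hμ : μ ≤ r) {N : ℕ} (hprev : nPrev r n μ ≤ (c : ℝ) / 2)
    (hext : (c : ℝ) / 2 < nExt r n N μ) :
    ∑ p ∈ Finset.univ.image n with c < 2 * p, (2 * (p : ℝ) - c) ^ e * (1 / 2) ^ p ≤
      polyGeomSeries e * ((2 * nExt r n N μ - c) ^ e * 2 ^ (-nExt r n N μ)) := by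
  set s := (Finset.univ.image n).filter (c < 2 * ·)
  have hmem {p : ℕ} (hp : p ∈ s) : ∃ a : ℕ, nExt r n N μ = a ∧ a ≤ p := by
    obtain ⟨hp, hcp⟩ := Finset.mem_filter.1 hp
    obtain ⟨i, -, rfl⟩ := Finset.mem_image.1 hp
    exact exists_nExt_eq_and_le hn hμ hprev N hcp
  rcases s.eq_empty_or_nonempty with hempty | ⟨p₀, hp₀⟩
  · rw [hempty, Finset.sum_empty]
    have hpos : 0 ≤ 2 * nExt r n N μ - c := by linarith
    have := polyGeomSeries_nonneg e
    positivity
  · obtain ⟨a, ha, -⟩ := hmem hp₀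
    rw [ha] at hext ⊢
    have hca : c + 1 ≤ 2 * a := by
      rw [div_lt_iff₀ two_pos] at hext
      have : c < a * 2 := by exact_mod_cast hext
      omega
    refine (sum_shifted_pow_mul_half_pow_le (n := a) e ?_ fun p hp ↦ ?_).trans_eq ?_
    · rw [le_sub_iff_add_le']
      exact_mod_cast hca
    · obtain ⟨a', ha', hle⟩ := hmem hp
      rwa [Nat.cast_injective (ha.symm.trans ha')]
    · rw [Real.rpow_neg two_pos.le, Real.rpow_natCast, one_div_pow, one_div, mul_assoc]

theorem haar_coeff_large_intervals_general (d : ℕ) :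
    ∃ C : ℝ, 0 < C ∧ ∀ (t : ℕ) (E : Fin d → ℕ → ℕ → ZMod 2), IsOrderSeq 2 t d E →
      ∀ N ≠ 0, ∀ (r : ℕ) (n : Fin r → ℕ), StrictMono n → N = ∑ i, 2 ^ n i →
        ∀ μ ≤ r, ∀ j : Fin d → ℤ, (∀ i, -1 ≤ j i) →
          nPrev r n μ ≤ (jnorm d j : ℝ) + (t : ℝ) / 2 →
          (jnorm d j : ℝ) + (t : ℝ) / 2 < nExt r n N μ →
          ∀ m : Fin d → ℕ, (∀ i, m i < 2 ^ (j i).toNat) →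
            |haarCoeff d (discSeq d (digitalSeq d E) N) j m| ≤
              C * 2 ^ t / N *
                (((2 : ℝ) ^ jnorm d j)⁻¹ +
                  (2 * nExt r n N μ - (t : ℝ) - 2 * (jnorm d j : ℝ)) ^ (d - 1) *
                    (2 : ℝ) ^ (-nExt r n N μ)) := by
  set P := polyGeomSeries (d - 1)
  have hP : 0 ≤ P := polyGeomSeries_nonneg _
  refine ⟨4 + 4 ^ d * P * P, by positivity, ?_⟩
  intro t E hE N hN r n hn hsum μ hμ j hj hprev hext m hm
  have hlevel : (jnorm d j : ℝ) + t / 2 = (2 * jnorm d j + t : ℕ) / 2 := by push_cast; ring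
  have hgap : 2 * nExt r n N μ - t - 2 * jnorm d j =
      2 * nExt r n N μ - (2 * jnorm d j + t : ℕ) := by
    push_cast
    ring
  rw [hlevel] at hprev hext
  have hpoints := abs_sum_range_pointHaarCoeff_le hE hj hm (Finset.univ.image n)
  rw [Finset.sum_image hn.injective.injOn, ← hsum] at hpoints
  have hblocks := sum_image_pow_mul_half_pow_le (d - 1) hn.monotone hμ hprev hext
  rw [haarCoeff_discSeq d _ hN, abs_div, Nat.abs_cast, hgap, div_mul_eq_mul_div]
  gcongr
  set A := (2 * nExt r n N μ - (2 * jnorm d j + t : ℕ)) ^ (d - 1) * (2 : ℝ) ^ (-nExt r n N μ)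
  have hA : 0 ≤ A := mul_nonneg (pow_nonneg (by linarith) _) (by positivity)
  calc _ ≤ 4 ^ d * P * 2 ^ t * (P * A) + 4 * 2 ^ t * (1 / 2) ^ jnorm d j :=
        hpoints.trans (by gcongr)
    _ = 2 ^ t * (4 ^ d * P * P * A + 4 * ((2 : ℝ) ^ jnorm d j)⁻¹) := by rw [one_div, inv_pow]; ring
    _ ≤ 2 ^ t * ((4 + 4 ^ d * P * P) * (((2 : ℝ) ^ jnorm d j)⁻¹ + A)) := by
        gcongr
        have hcross : 0 ≤ 4 * A + 4 ^ d * P * P * ((2 : ℝ) ^ jnorm d j)⁻¹ := by positivity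
        linarith
    _ = _ := by ring

/-- Haar coefficient bounds for large dyadic intervals
(`n_μ ≤ |j| + t/2 < n_{μ+1}`, where `N = 2^{n_r} + ⋯ + 2^{n_1}`, `n_0 = 0`,
`n_{r+1} = log₂ N`) of an order `2` digital `(t,d)`-sequence with triangular
generating matrices. -/
theorem haar_coeff_large_intervals (d : ℕ) (hd : 0 < d) :
    ∃ C : ℝ, 0 < C ∧ ∀ (t : ℕ) (E : Fin d → ℕ → ℕ → ZMod 2),
      IsOrderSeq 2 t d E → Triangular2 d E →
      ∀ (N : ℕ), 2 ≤ N → ∀ (r : ℕ), 0 < r → ∀ (n : Fin r → ℕ), StrictMono n →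
        N = ∑ i, 2 ^ (n i) →
        ∀ (μ : ℕ), μ ≤ r →
        ∀ (j : Fin d → ℤ), (∀ i, -1 ≤ j i) →
          nPrev r n μ ≤ (jnorm d j : ℝ) + (t:ℝ)/2 →
          (jnorm d j : ℝ) + (t:ℝ)/2 < nExt r n N μ →
          ∀ (m : Fin d → ℕ), (∀ i, m i < 2 ^ (j i).toNat) →
            |haarCoeff d (discSeq d (digitalSeq d E) N) j m| ≤
              C * 2 ^ t / N *
                (((2:ℝ) ^ (jnorm d j))⁻¹ +
                  (2 * nExt r n N μ - (t:ℝ) - 2 * (jnorm d j : ℝ)) ^ (d - 1) *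
                    (2:ℝ) ^ (-(nExt r n N μ))) := by
  obtain ⟨C, hC, hbound⟩ := haar_coeff_large_intervals_general d
  exact ⟨C, hC, fun t E hE _ N hN r _ n hn hsum μ hμ j hj hprev hext m hm ↦
    hbound t E hE N (by omega) r n hn hsum μ hμ j hj hprev hext m hm⟩

end
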